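/- Let m be a positive integer and let λ be a partition, written as λ = λ^0 + lλ̄ with λ^0 l-restricted and λ̄ a partition. Suppose that ℓ(Mull((λ^0)')) ≤ m and that λ_1 ≤ m(l−1). Then λ can be written in the form λ = λ(1) + … + λ(s), where each λ(i) is an m_i-distinguished partition (not necessarily l-restricted) for some integer 0 < m_i < l, and m = m_1 + … + m_s. (The hypothesis ℓ(Mull((λ^0)')) ≤ m is the paper's condition that the restricted partition λ^0 is m-special.) -/

import Mathlib

noncomputable section

/-- `p : ℕ → ℕ` represents the partition `λ` with `p i = λ_{i+1}` (0-indexed parts):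
a weakly decreasing, eventually zero sequence. -/
def IsPartition (p : ℕ → ℕ) : Prop :=
  (∀ i j, i ≤ j → p j ≤ p i) ∧ ∃ N, ∀ i, N ≤ i → p i = 0

/-- `ℓ(λ)`, the number of nonzero parts. -/
def plen (p : ℕ → ℕ) : ℕ := sInf {N | p N = 0}

/-- the degree (number of boxes) of the partition. -/
def pdeg (p : ℕ → ℕ) : ℕ := ∑ i ∈ Finset.range (plen p), p i

/-- `λ` is `l`-regular: no `l` consecutive parts are equal and nonzero. -/
def IsLRegular (l : ℕ) (p : ℕ → ℕ) : Prop :=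
  ∀ i, p i ≠ 0 → p (i + l - 1) ≠ p i

/-- `λ` is `l`-restricted: `λ_i - λ_{i+1} < l` for all `i`. -/
def IsLRestricted (l : ℕ) (p : ℕ → ℕ) : Prop :=
  ∀ i, p i - p (i + 1) < l

/-- the transpose (conjugate) partition. -/
def conjP (p : ℕ → ℕ) : ℕ → ℕ :=
  fun j => ((Finset.range (plen p)).filter fun i => j < p i).card

/-- the minimal `h ≥ 1` with `λ_1 - λ_{h+1} + h ≥ l`: when `e(λ) > l`, the first
`l`-segment of the `l`-edge lies in rows `1, …, h`. -/
def firstSeg (l : ℕ) (p : ℕ → ℕ) : ℕ := sInf {h | 1 ≤ h ∧ l ≤ p 0 - p h + h}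

/-- removal of the `l`-edge (with fuel): if `e(λ) ≤ l` the whole edge is removed,
otherwise the first `l`-segment is removed from rows `1, …, h` (`h = firstSeg`) and one
recurses on `(λ_{h+1}, λ_{h+2}, …)`. -/
def removeLEdgeAux (l : ℕ) : ℕ → (ℕ → ℕ) → ℕ → ℕ
  | 0, _ => fun _ => 0
  | n + 1, p =>
    if p 0 = 0 then fun _ => 0
    else if p 0 + plen p - 1 ≤ l then fun i => p (i + 1) - 1
    else fun i =>
      if i + 1 < firstSeg l p then p (i + 1) - 1
      else if i + 1 = firstSeg l p then p 0 + firstSeg l p - 1 - l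
      else removeLEdgeAux l n (fun j => p (j + firstSeg l p)) (i - firstSeg l p)

/-- the partition obtained by removing the `l`-edge of `λ`. -/
def removeLEdge (l : ℕ) (p : ℕ → ℕ) : ℕ → ℕ := removeLEdgeAux l (plen p) p

/-- `e_l(λ)`, the number of nodes of the `l`-edge. -/
def elen (l : ℕ) (p : ℕ → ℕ) : ℕ := pdeg p - pdeg (removeLEdge l p)

/-- the length of `Mull(λ)` prescribed by the defining recursion of the Mullineux map. -/
def mullLen (l : ℕ) (p : ℕ → ℕ) : ℕ :=
  if l ∣ elen l p then elen l p - plen p else elen l p - plen p + 1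

/-- the Mullineux map (with fuel): `Mull(0) = 0` and, for `λ ≠ 0` `l`-regular with `ν`
obtained from `λ` by removing the `l`-edge, `Mull(λ)` is the unique `l`-regular partition
whose `l`-edge removal leaves `Mull(ν)` and whose length is `e_l(λ) - ℓ(λ)` if
`l ∣ e_l(λ)` and `e_l(λ) - ℓ(λ) + 1` otherwise. -/
def mullAux (l : ℕ) : ℕ → (ℕ → ℕ) → ℕ → ℕ
  | 0, _ => fun _ => 0
  | n + 1, p =>
    if p 0 = 0 then fun _ => 0
    else
      Classical.epsilon fun μ : ℕ → ℕ =>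
        IsPartition μ ∧ IsLRegular l μ ∧
          removeLEdge l μ = mullAux l n (removeLEdge l p) ∧ plen μ = mullLen l p

/-- the Mullineux map. -/
def mull (l : ℕ) (p : ℕ → ℕ) : ℕ → ℕ := mullAux l (pdeg p) p

/-- the list of Mullineux components (with fuel). -/
def mullCompsAux (l : ℕ) : ℕ → (ℕ → ℕ) → List (ℕ → ℕ)
  | 0, _ => []
  | n + 1, p =>
    if p 0 = 0 then []
    else if elen l p ≤ l then [p]
    else (fun i => if i < firstSeg l p then p i else 0) ::
      mullCompsAux l n (fun j => p (j + firstSeg l p))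

/-- the Mullineux components of `λ`. -/
def mullComps (l : ℕ) (p : ℕ → ℕ) : List (ℕ → ℕ) := mullCompsAux l (plen p) p

/-- edge `l`-connectedness (with fuel): consecutive Mullineux components `α, ρ` satisfy
`α_1 - ρ_1 + ℓ(α) = l`. -/
def edgeConnAux (l : ℕ) : ℕ → (ℕ → ℕ) → Prop
  | 0, _ => True
  | n + 1, p =>
    if elen l p ≤ l then True
    else p 0 + firstSeg l p = l + p (firstSeg l p) ∧
      edgeConnAux l n fun j => p (j + firstSeg l p)

/-- `λ` is edge `l`-connected. -/
def EdgeLConnected (l : ℕ) (p : ℕ → ℕ) : Prop := edgeConnAux l (plen p) p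

/-- the node `(i+1, λ_{i+1})` (in row `i+1`, 1-indexed) is a removable node. -/
def Removable (p : ℕ → ℕ) (i : ℕ) : Prop := p (i + 1) < p i

/-- removal of the removable node in row `i+1`. -/
def removeNode (p : ℕ → ℕ) (i : ℕ) : ℕ → ℕ := fun k => if k = i then p i - 1 else p k

/-- there is an addable node `(i+1, λ_{i+1} + 1)` in row `i+1` (1-indexed). -/
def Addable (p : ℕ → ℕ) (i : ℕ) : Prop := i ≤ plen p ∧ (i = 0 ∨ p i < p (i - 1))

/-- the removable node in row `i+1` is suitable: its residue (mod `l`) differs from the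
residue of every lower addable node. -/
def Suitable (l : ℕ) (p : ℕ → ℕ) (i : ℕ) : Prop :=
  Removable p i ∧ ∀ j, i < j → Addable p j →
    ¬ ((p j : ℤ) - (j : ℤ) ≡ (p i : ℤ) - (i : ℤ) - 1 [ZMOD (l : ℤ)])

/-- the removable node in row `i+1` is co-suitable: its transpose node is a suitable
node of the transpose partition. -/
def CoSuitable (l : ℕ) (p : ℕ → ℕ) (i : ℕ) : Prop :=
  Removable p i ∧ Suitable l (conjP p) (p i - 1)

/-- `Φ_m`: partitions with at most `m` parts and `λ_1 - λ_m ≤ l - m`. -/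
def Phi (l m : ℕ) : Set (ℕ → ℕ) :=
  {p | IsPartition p ∧ plen p ≤ m ∧ p 0 - p (m - 1) ≤ l - m}

/-- `λ` is `m`-distinguished: `λ = λ⁰ + lλ̄` with
`λ⁰ = ((l-m)^k, a_1, …, a_m)`, `l - m > a_1 ≥ … ≥ a_m ≥ 0`, and `λ̄` a partition with
`λ̄_1 ≤ m - 1`. -/
def IsDistinguished (l m : ℕ) (p : ℕ → ℕ) : Prop :=
  ∃ (k : ℕ) (a : ℕ → ℕ) (pb : ℕ → ℕ),
    IsPartition pb ∧ pb 0 < m ∧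
    (∀ i j, i ≤ j → a j ≤ a i) ∧ a 0 < l - m ∧ (∀ i, m ≤ i → a i = 0) ∧
    ∀ i, p i = (if i < k then l - m else a (i - k)) + l * pb i

/-- `q` is obtained from `p` by removing a skew `l`-hook (spanning rows `a+1, …, b+1`,
1-indexed). -/
def IsHookRemoval (l : ℕ) (p q : ℕ → ℕ) : Prop :=
  IsPartition q ∧ ∃ a b : ℕ, a ≤ b ∧
    (∀ i, i < a → q i = p i) ∧
    (∀ i, a ≤ i → i < b → q i + 1 = p (i + 1)) ∧
    q b + l = p a + (b - a) ∧
    ∀ i, b < i → q i = p i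

/-- `q` is the `l`-core of `p`: obtained by repeatedly removing skew `l`-hooks until
none remain. -/
def IsCoreOf (l : ℕ) (p q : ℕ → ℕ) : Prop :=
  Relation.ReflTransGen (fun x y => IsHookRemoval l x y) p q ∧ ∀ r, ¬ IsHookRemoval l q r

/-- the `l`-core of `p`. -/
def lCore (l : ℕ) (p : ℕ → ℕ) : ℕ → ℕ := Classical.epsilon (IsCoreOf l p)

/-!
Work with the beta-numbers `λ_{i+1} - i`. Removing the `l`-edge replaces the beta-number of row `i`
by the larger of the next beta-number and `W_i - l`, where `W_i` is the beta-number of the first row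
of the `l`-segment containing row `i`. In these terms the prescribed length of `Mull(λ)` is `λ_1`
minus the number of edge nodes skipped between consecutive segments. The segment heads of `λ`
interlace with those of `λ` with its `l`-edge removed, so the prescribed length drops by between `0`
and `l` from one stage of the recursion to the next. Conversely, an `l`-edge can be added to an
`l`-regular partition so as to increase the length by any such amount. So the recursion never gets
stuck, and `ℓ(Mull(λ))` can be read off the `l`-segments: a full segment with `h` rows contributes
`l - h`.

Applied to `(λ⁰)'`, these `h` rows are `h` columns of `λ⁰`. They form an `(l - h)`-distinguished
partition whose first part is exactly `h`, and `(l - h)(l - 1) = l(l - h - 1) + h`. So after this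
block has absorbed the first `l - h - 1` columns of `λ̄`, the most it can, the bound
`λ_1 ≤ m(l - 1)` is inherited by the remaining columns of `λ⁰` and `λ̄`, and one inducts on the
number of columns of `λ⁰`.
-/

namespace IsPartition

variable {p : ℕ → ℕ}

lemma antitone (hp : IsPartition p) : Antitone p := fun i j => hp.1 i j

lemma of_succ_le (hp : ∀ i, p (i + 1) ≤ p i) {N : ℕ} (hN : p N = 0) : IsPartition p :=
  ⟨fun _ _ hij => antitone_nat_of_succ_le hp hij, N,
    fun _ hi => Nat.eq_zero_of_le_zero (hN ▸ antitone_nat_of_succ_le hp hi)⟩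

lemma zero : IsPartition (fun _ => 0) := ⟨fun _ _ _ => le_rfl, 0, fun _ _ => rfl⟩

lemma comp (hp : IsPartition p) {f : ℕ → ℕ} (hf : Monotone f) (hf0 : f 0 = 0) :
    IsPartition (fun i => f (p i)) := by
  obtain ⟨hanti, N, hN⟩ := hp
  exact ⟨fun i j hij => hf (hanti i j hij), N, fun i hi => by simp only [hN i hi, hf0]⟩

lemma min_const (hp : IsPartition p) (c : ℕ) : IsPartition (fun i => min (p i) c) :=
  hp.comp (f := (min · c)) (fun _ _ h => min_le_min_right c h) (Nat.zero_min c)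

lemma sub_const (hp : IsPartition p) (c : ℕ) : IsPartition (fun i => p i - c) :=
  hp.comp (f := (· - c)) (fun _ _ h => Nat.sub_le_sub_right h c) (Nat.zero_sub c)

lemma shift (hp : IsPartition p) (h : ℕ) : IsPartition (fun i => p (i + h)) := by
  obtain ⟨hanti, N, hN⟩ := hp
  exact ⟨fun i j hij => hanti _ _ (Nat.add_le_add_right hij h), N, fun i hi => hN _ (by omega)⟩

lemma lt_plen_iff (hp : IsPartition p) {i : ℕ} : i < plen p ↔ 0 < p i := by
  obtain ⟨N, hN⟩ := hp.2
  constructor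
  · exact fun hi => Nat.pos_of_ne_zero (Nat.notMem_of_lt_sInf (s := {N | p N = 0}) hi)
  · intro hi
    by_contra! hle
    have hplen : p (plen p) = 0 := Nat.sInf_mem (s := {N | p N = 0}) ⟨N, hN N le_rfl⟩
    have := hp.antitone hle
    omega

lemma eq_zero_iff (hp : IsPartition p) {i : ℕ} : p i = 0 ↔ plen p ≤ i := by
  rw [← not_lt, hp.lt_plen_iff, Nat.pos_iff_ne_zero, not_not]

lemma plen_eq (hp : IsPartition p) {n : ℕ} (h : ∀ i, i < n ↔ 0 < p i) : plen p = n :=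
  eq_of_forall_lt_iff fun i => hp.lt_plen_iff.trans (h i).symm

lemma plen_shift (hp : IsPartition p) (h : ℕ) : plen (fun i => p (i + h)) = plen p - h :=
  (hp.shift h).plen_eq fun i => by rw [← hp.lt_plen_iff]; omega

lemma pdeg_eq_sum (hp : IsPartition p) {N : ℕ} (hN : plen p ≤ N) :
    pdeg p = ∑ i ∈ Finset.range N, p i :=
  Finset.sum_subset (Finset.range_subset_range.2 hN) fun i _ hi =>
    hp.eq_zero_iff.2 (by simpa using hi)

lemma conjP_apply (hp : IsPartition p) (j : ℕ) : conjP p j = plen (fun i => p i - j) := by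
  have hfilter : (Finset.range (plen p)).filter (fun i => j < p i) =
      Finset.range (plen fun i => p i - j) := by
    ext i
    rw [Finset.mem_filter, Finset.mem_range, Finset.mem_range, hp.lt_plen_iff,
      (hp.sub_const j).lt_plen_iff]
    omega
  rw [conjP, hfilter, Finset.card_range]

lemma lt_conjP_iff (hp : IsPartition p) {j k : ℕ} : k < conjP p j ↔ j < p k := by
  rw [hp.conjP_apply, (hp.sub_const j).lt_plen_iff, Nat.sub_pos_iff_lt]

protected lemma conjP (hp : IsPartition p) : IsPartition (conjP p) := by
  refine .of_succ_le (N := p 0) (fun j => ?_) ?_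
  · exact le_of_forall_lt fun k hk => hp.lt_conjP_iff.2 (by have := hp.lt_conjP_iff.1 hk; omega)
  · exact Nat.eq_zero_of_not_pos (hp.lt_conjP_iff.not.2 (lt_irrefl _))

lemma plen_conjP (hp : IsPartition p) : plen (conjP p) = p 0 :=
  hp.conjP.plen_eq fun _ => hp.lt_conjP_iff.symm

lemma conjP_conjP (hp : IsPartition p) : conjP (conjP p) = p :=
  funext fun _ => eq_of_forall_lt_iff fun _ => hp.conjP.lt_conjP_iff.trans hp.lt_conjP_iff

lemma conjP_apply_zero (hp : IsPartition p) : conjP p 0 = plen p :=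
  hp.conjP_apply 0

lemma conjP_shift (hp : IsPartition p) (h : ℕ) :
    conjP (fun i => p (i + h)) = fun j => conjP p j - h := by
  funext j
  refine eq_of_forall_lt_iff fun k => ?_
  rw [(hp.shift h).lt_conjP_iff, ← hp.lt_conjP_iff, Nat.lt_sub_iff_add_lt]

end IsPartition

lemma IsLRestricted.isLRegular_conjP {l : ℕ} {p : ℕ → ℕ} (hp : IsPartition p)
    (hres : IsLRestricted l p) : IsLRegular l (conjP p) := by
  intro i hi heq
  obtain ⟨k, hk⟩ := Nat.exists_eq_succ_of_ne_zero hi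
  have hlast : i + l - 1 < p k := hp.lt_conjP_iff.1 (by omega)
  have hnext : ¬ i < p (k + 1) := fun h => by
    have := hp.lt_conjP_iff.2 h
    omega
  have := hres k
  omega

lemma IsLRegular.shift {l : ℕ} {p : ℕ → ℕ} (hl : 0 < l) (hreg : IsLRegular l p) (h : ℕ) :
    IsLRegular l (fun i => p (i + h)) := by
  intro i hi
  have := hreg (i + h) hi
  rwa [show i + h + l - 1 = i + l - 1 + h by omega] at this

/-! ### Beta-numbers and `l`-segments -/

/-- The beta-number `λ_{i+1} - i` of row `i`; strictly decreasing in `i` for a partition. -/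
def betaNumber (p : ℕ → ℕ) (i : ℕ) : ℤ := (p i : ℤ) - i

/-- The beta-number of the first row of the `l`-segment containing row `i`. The next segment
starts at the first row whose beta-number is smaller by at least `l`. -/
def segmentHead (l : ℕ) (p : ℕ → ℕ) : ℕ → ℤ
  | 0 => betaNumber p 0
  | i + 1 =>
    if betaNumber p (i + 1) ≤ segmentHead l p i - l then betaNumber p (i + 1)
    else segmentHead l p i

/-- `λ_1` minus the number of edge nodes skipped between consecutive `l`-segments down to row
`i`. Its value below the last row is the length of `Mull(λ)`. -/
def scanLength (l : ℕ) (p : ℕ → ℕ) : ℕ → ℤ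
  | 0 => betaNumber p 0
  | i + 1 => scanLength l p i - max 0 (segmentHead l p i - l - betaNumber p (i + 1))

lemma scan_succ (l : ℕ) (p : ℕ → ℕ) (i : ℕ) :
    (betaNumber p (i + 1) ≤ segmentHead l p i - l ∧
      segmentHead l p (i + 1) = betaNumber p (i + 1) ∧
      scanLength l p (i + 1) =
        scanLength l p i - (segmentHead l p i - l - betaNumber p (i + 1))) ∨
    (segmentHead l p i - l < betaNumber p (i + 1) ∧
      segmentHead l p (i + 1) = segmentHead l p i ∧
      scanLength l p (i + 1) = scanLength l p i) := by
  simp only [segmentHead, scanLength]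
  split_ifs <;> omega

lemma segmentHead_sub_lt_betaNumber {l : ℕ} (hl : 0 < l) (p : ℕ → ℕ) (i : ℕ) :
    segmentHead l p i - l < betaNumber p i := by
  cases i with
  | zero => simp only [segmentHead]; omega
  | succ i => rcases scan_succ l p i with h | h <;> omega

lemma segmentHead_antitone (l : ℕ) (p : ℕ → ℕ) : Antitone (segmentHead l p) :=
  antitone_nat_of_succ_le fun i => by rcases scan_succ l p i with h | h <;> omega

lemma betaNumber_shift (p : ℕ → ℕ) (h i : ℕ) :
    betaNumber (fun j => p (j + h)) i = betaNumber p (i + h) + h := by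
  simp only [betaNumber, Nat.cast_add]
  ring

lemma lt_betaNumber_of_lt_firstSeg {l : ℕ} (hl : 0 < l) {p : ℕ → ℕ} {i : ℕ}
    (hi : i < firstSeg l p) : (p 0 : ℤ) - l < betaNumber p i := by
  have hmem : ¬ (1 ≤ i ∧ l ≤ p 0 - p i + i) :=
    Nat.notMem_of_lt_sInf (s := {h | 1 ≤ h ∧ l ≤ p 0 - p h + h}) hi
  rcases Nat.eq_zero_or_pos i with rfl | hpos <;> unfold betaNumber <;> omega

lemma scan_of_lt_firstSeg {l : ℕ} (hl : 0 < l) {p : ℕ → ℕ} {i : ℕ} (hi : i < firstSeg l p) :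
    segmentHead l p i = p 0 ∧ scanLength l p i = p 0 := by
  induction i with
  | zero => simp [segmentHead, scanLength, betaNumber]
  | succ i ih =>
    have := ih (by omega)
    have := lt_betaNumber_of_lt_firstSeg hl hi
    rcases scan_succ l p i with h | h <;> omega

namespace IsPartition

variable {l : ℕ} {p : ℕ → ℕ}

lemma betaNumber_succ_lt (hp : IsPartition p) (i : ℕ) :
    betaNumber p (i + 1) < betaNumber p i := by
  have : p (i + 1) ≤ p i := hp.antitone i.le_succ
  unfold betaNumber
  omega

lemma betaNumber_antitone (hp : IsPartition p) : Antitone (betaNumber p) :=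
  antitone_nat_of_succ_le fun i => (hp.betaNumber_succ_lt i).le

lemma betaNumber_of_plen_le (hp : IsPartition p) {i : ℕ} (hi : plen p ≤ i) :
    betaNumber p i = -i := by
  simp [betaNumber, hp.eq_zero_iff.2 hi]

lemma neg_lt_betaNumber_iff (hp : IsPartition p) {i : ℕ} :
    -(i : ℤ) < betaNumber p i ↔ i < plen p := by
  rw [hp.lt_plen_iff, betaNumber]
  omega

lemma betaNumber_le_segmentHead (hp : IsPartition p) (i : ℕ) :
    betaNumber p i ≤ segmentHead l p i := by
  induction i with
  | zero => exact le_rfl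
  | succ i ih =>
    have := hp.betaNumber_succ_lt i
    rcases scan_succ l p i with h | h <;> omega

lemma segmentHead_eq_or_le (hp : IsPartition p) {i k : ℕ} (hik : i ≤ k) :
    segmentHead l p k = segmentHead l p i ∨ segmentHead l p k ≤ betaNumber p (i + 1) := by
  induction k, hik using Nat.le_induction with
  | base => exact .inl rfl
  | succ k hik ih =>
    have := hp.betaNumber_antitone (Nat.add_le_add_right hik 1)
    rcases scan_succ l p k with h | h <;> omega

lemma scanLength_of_plen_le (hp : IsPartition p) (hl : 0 < l) {i : ℕ} (hi : plen p ≤ i) :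
    scanLength l p i = scanLength l p (plen p) := by
  induction i, hi using Nat.le_induction with
  | base => rfl
  | succ i hi ih =>
    have hhead := segmentHead_sub_lt_betaNumber hl p i
    rw [hp.betaNumber_of_plen_le hi] at hhead
    have hnext := hp.betaNumber_of_plen_le (i := i + 1) (by omega)
    rw [← ih]
    rcases scan_succ l p i with h | h <;> omega

lemma firstSeg_spec (hp : IsPartition p) (l : ℕ) :
    1 ≤ firstSeg l p ∧ betaNumber p (firstSeg l p) ≤ p 0 - l := by
  have hne : {h | 1 ≤ h ∧ l ≤ p 0 - p h + h}.Nonempty :=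
    ⟨l + 1, Nat.le_add_left 1 l, by omega⟩
  obtain ⟨hpos, hle⟩ : 1 ≤ firstSeg l p ∧ l ≤ p 0 - p (firstSeg l p) + firstSeg l p :=
    Nat.sInf_mem hne
  have : p (firstSeg l p) ≤ p 0 := hp.antitone (Nat.zero_le _)
  refine ⟨hpos, ?_⟩
  unfold betaNumber
  omega

lemma scan_add_firstSeg (hp : IsPartition p) (hl : 0 < l) (i : ℕ) :
    segmentHead l p (i + firstSeg l p) =
        segmentHead l (fun j => p (j + firstSeg l p)) i - firstSeg l p ∧
      scanLength l p (i + firstSeg l p) =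
        scanLength l (fun j => p (j + firstSeg l p)) i + l - firstSeg l p := by
  obtain ⟨hpos, hle⟩ := hp.firstSeg_spec l
  induction i with
  | zero =>
    obtain ⟨k, hk⟩ : ∃ k, firstSeg l p = k + 1 := ⟨firstSeg l p - 1, by omega⟩
    have := scan_of_lt_firstSeg hl (show k < firstSeg l p by omega)
    have hbeta := betaNumber_shift p (firstSeg l p) 0
    have hstep := scan_succ l p k
    rw [Nat.zero_add, ← hk] at *
    rw [segmentHead.eq_1 l fun j => p (j + firstSeg l p),
      scanLength.eq_1 l fun j => p (j + firstSeg l p)]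
    omega
  | succ i ih =>
    have hbeta := betaNumber_shift p (firstSeg l p) (i + 1)
    have hstep := scan_succ l (fun j => p (j + firstSeg l p)) i
    have hstep' := scan_succ l p (i + firstSeg l p)
    rw [Nat.add_right_comm] at hbeta ⊢
    omega

lemma segmentHead_lt_of_plen_le (hp : IsPartition p) (hl : 0 < l) {i : ℕ} (hi : plen p ≤ i) :
    segmentHead l p i < l - i := by
  have := segmentHead_sub_lt_betaNumber hl p i
  rw [hp.betaNumber_of_plen_le hi] at this
  omega

lemma removeLEdgeAux_apply (hp : IsPartition p) (hl : 0 < l) {n : ℕ} (hn : plen p ≤ n)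
    (i : ℕ) : removeLEdgeAux l n p i = max (p (i + 1) - 1) (segmentHead l p i - l + i).toNat := by
  have hzero {p : ℕ → ℕ} (hp : IsPartition p) {i : ℕ} (hi : plen p ≤ i) :
      0 = max (p (i + 1) - 1) (segmentHead l p i - l + i).toNat := by
    have := hp.segmentHead_lt_of_plen_le hl hi
    have : p (i + 1) = 0 := hp.eq_zero_iff.2 (by omega)
    omega
  induction n generalizing p i with
  | zero => exact hzero hp (by omega)
  | succ n ih =>
    rw [removeLEdgeAux]
    split_ifs with hempty hedge
    · exact hzero hp (by have := hp.eq_zero_iff.1 hempty; omega)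
    · change p (i + 1) - 1 = _
      have : segmentHead l p i ≤ p 0 := by
        simpa [segmentHead, betaNumber] using segmentHead_antitone l p (Nat.zero_le i)
      by_cases hi : plen p ≤ i
      · have := hzero hp hi
        omega
      · omega
    · obtain ⟨hpos, hle⟩ := hp.firstSeg_spec l
      dsimp only
      split_ifs with hbefore hlast
      · have := lt_betaNumber_of_lt_firstSeg hl hbefore
        have := scan_of_lt_firstSeg hl (p := p) (i := i) (by omega)
        unfold betaNumber at *
        omega
      · have := scan_of_lt_firstSeg hl (p := p) (i := i) (by omega)
        rw [← hlast] at hle ⊢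
        unfold betaNumber at hle
        omega
      · obtain ⟨k, rfl⟩ := Nat.exists_eq_add_of_le' (show firstSeg l p ≤ i by omega)
        have hshift := hp.shift (firstSeg l p)
        have hhead := (hp.scan_add_firstSeg hl k).1
        rw [Nat.add_sub_cancel, ih hshift (by rw [hp.plen_shift]; omega), hhead,
          Nat.add_right_comm]
        omega

end IsPartition

lemma dvd_scanLength_sub_segmentHead (l : ℕ) (p : ℕ → ℕ) (i : ℕ) :
    (l : ℤ) ∣ scanLength l p i - segmentHead l p i := by
  induction i with
  | zero => simp [scanLength, segmentHead]
  | succ i ih =>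
    obtain ⟨c, hc⟩ := ih
    rcases scan_succ l p i with ⟨-, hhead, hscan⟩ | ⟨-, hhead, hscan⟩ <;> rw [hhead, hscan]
    · exact ⟨c + 1, by linear_combination hc⟩
    · exact ⟨c, hc⟩

namespace IsPartition

variable {l : ℕ} {p : ℕ → ℕ}

lemma removeLEdge_apply (hp : IsPartition p) (hl : 0 < l) (i : ℕ) :
    removeLEdge l p i = max (p (i + 1) - 1) (segmentHead l p i - l + i).toNat :=
  hp.removeLEdgeAux_apply hl le_rfl i

lemma betaNumber_removeLEdge (hp : IsPartition p) (hl : 0 < l) (i : ℕ) :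
    betaNumber (removeLEdge l p) i =
      max (max (betaNumber p (i + 1)) (segmentHead l p i - l)) (-i) := by
  unfold betaNumber
  rw [hp.removeLEdge_apply hl]
  omega

lemma sub_removeLEdge (hp : IsPartition p) (hl : 0 < l) (i : ℕ) :
    (p i : ℤ) - removeLEdge l p i =
      betaNumber p i - max (max (betaNumber p (i + 1)) (segmentHead l p i - l)) (-i) := by
  rw [← hp.betaNumber_removeLEdge hl, betaNumber, betaNumber]
  ring

lemma removeLEdge_lt (hp : IsPartition p) (hl : 0 < l) {i : ℕ} (hi : i < plen p) :
    removeLEdge l p i < p i := by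
  have := hp.sub_removeLEdge hl i
  have := hp.betaNumber_succ_lt i
  have := segmentHead_sub_lt_betaNumber hl p i
  have := hp.neg_lt_betaNumber_iff.2 hi
  omega

lemma removeLEdge_of_plen_le (hp : IsPartition p) (hl : 0 < l) {i : ℕ} (hi : plen p ≤ i) :
    removeLEdge l p i = 0 := by
  have := hp.segmentHead_lt_of_plen_le hl hi
  have := hp.eq_zero_iff.2 (show plen p ≤ i + 1 by omega)
  rw [hp.removeLEdge_apply hl]
  omega

protected lemma removeLEdge (hp : IsPartition p) (hl : 0 < l) : IsPartition (removeLEdge l p) := by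
  refine .of_succ_le (fun i => ?_) (hp.removeLEdge_of_plen_le hl le_rfl)
  have hbeta := hp.betaNumber_removeLEdge hl i
  have hbeta' := hp.betaNumber_removeLEdge hl (i + 1)
  have := hp.betaNumber_succ_lt (i + 1)
  have := segmentHead_sub_lt_betaNumber hl p (i + 1)
  simp only [betaNumber] at *
  omega

lemma plen_removeLEdge_le (hp : IsPartition p) (hl : 0 < l) :
    plen (removeLEdge l p) ≤ plen p :=
  (hp.removeLEdge hl).eq_zero_iff.1 (hp.removeLEdge_of_plen_le hl le_rfl)

lemma isLRegular_iff_betaNumber (hp : IsPartition p) (hl : 0 < l) :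
    IsLRegular l p ↔ ∀ i < plen p, betaNumber p (i + l - 1) + l ≤ betaNumber p i := by
  refine forall_congr' fun i => ?_
  have : p (i + l - 1) ≤ p i := hp.antitone (by omega)
  rw [hp.lt_plen_iff, Nat.pos_iff_ne_zero]
  refine imp_congr_right fun _ => ?_
  unfold betaNumber
  omega

lemma isLRegular_removeLEdge (hp : IsPartition p) (hl : 0 < l) (hreg : IsLRegular l p) :
    IsLRegular l (removeLEdge l p) := by
  rw [(hp.removeLEdge hl).isLRegular_iff_betaNumber hl]
  rw [hp.isLRegular_iff_betaNumber hl] at hreg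
  intro i hi
  have hpos := (hp.removeLEdge hl).neg_lt_betaNumber_iff.2 hi
  have hi' := hi.trans_le (hp.plen_removeLEdge_le hl)
  have hgap := hreg i hi'
  have hgap' : betaNumber p (i + l - 1 + 1) + l ≤ max (betaNumber p (i + 1)) (-i) := by
    by_cases hlast : i + 1 < plen p
    · have := hreg (i + 1) hlast
      rw [show i + l - 1 + 1 = i + 1 + l - 1 by omega]
      omega
    · rw [hp.betaNumber_of_plen_le (show plen p ≤ i + l - 1 + 1 by omega)]
      omega
  have hhead := hp.betaNumber_le_segmentHead (l := l) i
  have hhead' := segmentHead_sub_lt_betaNumber hl p (i + l - 1)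
  have hsegment := hp.segmentHead_eq_or_le (l := l) (show i ≤ i + l - 1 by omega)
  rw [hp.betaNumber_removeLEdge hl] at hpos ⊢
  rw [hp.betaNumber_removeLEdge hl]
  omega

lemma sum_sub_removeLEdge (hp : IsPartition p) (hl : 0 < l) {k : ℕ} (hk : k < plen p) :
    ∑ i ∈ Finset.range k, ((p i : ℤ) - removeLEdge l p i) =
      scanLength l p k - betaNumber p k := by
  induction k with
  | zero => simp [scanLength]
  | succ k ih =>
    rw [Finset.sum_range_succ, ih (by omega), hp.sub_removeLEdge hl]
    have := hp.neg_lt_betaNumber_iff.2 hk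
    rcases scan_succ l p k with h | h <;> omega

lemma pdeg_removeLEdge_add_plen_le (hp : IsPartition p) (hl : 0 < l) :
    pdeg (removeLEdge l p) + plen p ≤ pdeg p := by
  rw [hp.pdeg_eq_sum le_rfl, (hp.removeLEdge hl).pdeg_eq_sum (hp.plen_removeLEdge_le hl)]
  simpa [Finset.sum_add_distrib] using Finset.sum_le_sum fun i hi =>
    Nat.succ_le_of_lt (hp.removeLEdge_lt hl (Finset.mem_range.1 hi))

lemma plen_le_elen (hp : IsPartition p) (hl : 0 < l) : plen p ≤ elen l p :=
  Nat.le_sub_of_add_le' (hp.pdeg_removeLEdge_add_plen_le hl)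

lemma elen_eq_sum (hp : IsPartition p) (hl : 0 < l) :
    (elen l p : ℤ) = ∑ i ∈ Finset.range (plen p), ((p i : ℤ) - removeLEdge l p i) := by
  have := hp.pdeg_removeLEdge_add_plen_le hl
  rw [Finset.sum_sub_distrib, elen, Nat.cast_sub (by omega), hp.pdeg_eq_sum le_rfl,
    (hp.removeLEdge hl).pdeg_eq_sum (hp.plen_removeLEdge_le hl)]
  push_cast
  rfl

theorem mullLen_eq_scanLength (hp : IsPartition p) (hl : 0 < l) {k : ℕ} (hk : plen p ≤ k) :
    (mullLen l p : ℤ) = scanLength l p k := by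
  have hle := hp.plen_le_elen hl
  have hsum := hp.elen_eq_sum hl
  rw [hp.scanLength_of_plen_le hl hk, mullLen]
  rcases hr : plen p with _ | r
  · have : p 0 = 0 := hp.eq_zero_iff.2 hr.le
    rw [hr, Finset.sum_range_zero, Nat.cast_eq_zero] at hsum
    simp [hsum, scanLength, betaNumber, this]
  · rw [hr, Finset.sum_range_succ, hp.sum_sub_removeLEdge hl (by omega),
      hp.sub_removeLEdge hl] at hsum
    have hnext := hp.betaNumber_of_plen_le hr.le
    have hrow := hp.neg_lt_betaNumber_iff.2 (show r < plen p by omega)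
    have hhead := hp.betaNumber_le_segmentHead (l := l) r
    have hdvd := dvd_scanLength_sub_segmentHead l p r
    have hstep := scan_succ l p r
    by_cases hfull : (l : ℤ) ≤ segmentHead l p r + r
    · have : (l : ℤ) ∣ elen l p := by
        rw [show (elen l p : ℤ) = scanLength l p r - segmentHead l p r + l by omega]
        exact hdvd.add (dvd_refl _)
      rw [if_pos (Int.natCast_dvd_natCast.1 this)]
      omega
    · have : ¬ l ∣ elen l p := by
        rw [← Int.natCast_dvd_natCast, show (elen l p : ℤ) =
          scanLength l p r - segmentHead l p r + (segmentHead l p r + r) by omega,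
          dvd_add_right hdvd]
        exact fun h => by have := Int.le_of_dvd (by omega) h; omega
      rw [if_neg this]
      omega

lemma scan_removeLEdge (hp : IsPartition p) (hl : 0 < l) {i : ℕ} (hi : i < plen p) :
    (segmentHead l p i - l ≤ segmentHead l (removeLEdge l p) i ∧
      segmentHead l (removeLEdge l p) i < segmentHead l p i ∧
      scanLength l (removeLEdge l p) i - segmentHead l (removeLEdge l p) i =
        scanLength l p i - segmentHead l p i) ∨
    (segmentHead l p i ≤ segmentHead l (removeLEdge l p) i ∧
      segmentHead l p i - l < betaNumber (removeLEdge l p) i ∧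
      scanLength l (removeLEdge l p) i - segmentHead l (removeLEdge l p) i =
        scanLength l p i - segmentHead l p i - l) := by
  induction i with
  | zero =>
    have hrow := hp.neg_lt_betaNumber_iff.2 hi
    have hbeta := hp.betaNumber_removeLEdge hl 0
    have hnext := hp.betaNumber_succ_lt 0
    simp only [segmentHead, scanLength] at hbeta ⊢
    omega
  | succ i ih =>
    have hrow := hp.neg_lt_betaNumber_iff.2 hi
    have hbeta := hp.betaNumber_removeLEdge hl i
    have hbeta' := hp.betaNumber_removeLEdge hl (i + 1)
    have hnext := hp.betaNumber_succ_lt (i + 1)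
    have hhead := hp.betaNumber_le_segmentHead (l := l) (i + 1)
    have hstep := scan_succ l p i
    have hstep' := scan_succ l (removeLEdge l p) i
    have := ih (by omega)
    omega

theorem mullLen_removeLEdge_le (hp : IsPartition p) (hl : 0 < l) :
    mullLen l (removeLEdge l p) ≤ mullLen l p ∧
      mullLen l p ≤ mullLen l (removeLEdge l p) + l := by
  have hlen := hp.mullLen_eq_scanLength hl le_rfl
  have hlen' := (hp.removeLEdge hl).mullLen_eq_scanLength hl (hp.plen_removeLEdge_le hl)
  rcases hr : plen p with _ | r
  · have : p 0 = 0 := hp.eq_zero_iff.2 hr.le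
    rw [hr] at hlen hlen'
    simp only [scanLength, betaNumber, this, hp.removeLEdge_of_plen_le hl hr.le] at hlen hlen'
    omega
  · rw [hr] at hlen hlen'
    have := hp.scan_removeLEdge hl (show r < plen p by omega)
    have hnext := hp.betaNumber_of_plen_le hr.le
    have hnext' := (hp.removeLEdge hl).betaNumber_of_plen_le
      ((hp.plen_removeLEdge_le hl).trans hr.le)
    have hhead := hp.betaNumber_le_segmentHead (l := l) r
    have hrow := hp.neg_lt_betaNumber_iff.2 (show r < plen p by omega)
    have hstep := scan_succ l p r
    have hstep' := scan_succ l (removeLEdge l p) r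
    omega

end IsPartition

/-! ### Adding an `l`-edge -/

/-- The segment heads of the partition obtained from `q` by adding an `l`-edge ending in row `n`
with `d ≤ 1` nodes (`d = 0` meaning that row `n` stays empty); below row `n`, where `q` is empty,
it is the beta-number of an empty row. It is computed from the bottom row upwards: a new segment
ends above row `i + 1` exactly when it can have `l` nodes. -/
def addedHead (l : ℕ) (q : ℕ → ℕ) (n d i : ℕ) : ℤ :=
  if i < n then
    if addedHead l q n d (i + 1) ≤ betaNumber q i then betaNumber q i + l
    else addedHead l q n d (i + 1)
  else if i = n then d - n
  else -i
termination_by n - i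

/-- The partition obtained from `q` by adding the `l`-edge with segment heads `addedHead`. -/
def addEdge (l : ℕ) (q : ℕ → ℕ) (n d : ℕ) : ℕ → ℕ
  | 0 => (addedHead l q n d 0).toNat
  | i + 1 => min (q i + 1) (addedHead l q n d (i + 1) + (i + 1)).toNat

lemma addedHead_of_lt (l : ℕ) (q : ℕ → ℕ) {n : ℕ} (d : ℕ) {i : ℕ} (hi : i < n) :
    (addedHead l q n d (i + 1) ≤ betaNumber q i ∧
      addedHead l q n d i = betaNumber q i + l) ∨
    (betaNumber q i < addedHead l q n d (i + 1) ∧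
      addedHead l q n d i = addedHead l q n d (i + 1)) := by
  rw [addedHead.eq_1 l q n d i, if_pos hi]
  split_ifs <;> omega

lemma addedHead_self (l : ℕ) (q : ℕ → ℕ) (n d : ℕ) : addedHead l q n d n = d - n := by
  rw [addedHead, if_neg (lt_irrefl n), if_pos rfl]

lemma addedHead_of_gt (l : ℕ) (q : ℕ → ℕ) {n : ℕ} (d : ℕ) {i : ℕ} (hi : n < i) :
    addedHead l q n d i = -i := by
  rw [addedHead, if_neg (by omega), if_neg (by omega)]

lemma neg_le_betaNumber (q : ℕ → ℕ) (i : ℕ) : -(i : ℤ) ≤ betaNumber q i := by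
  unfold betaNumber
  omega

lemma betaNumber_lt_addedHead {l : ℕ} (hl : 0 < l) (q : ℕ → ℕ) {n : ℕ} (d : ℕ) {i : ℕ}
    (hi : i < n) : betaNumber q i < addedHead l q n d i := by
  rcases addedHead_of_lt l q d hi with h | h <;> omega

lemma exists_addedHead_eq (l : ℕ) (q : ℕ → ℕ) {n d i : ℕ} (hd : d ≤ 1) (hi : i < n) :
    ∃ j, i ≤ j ∧ j < n ∧ addedHead l q n d i = betaNumber q j + l := by
  rcases addedHead_of_lt l q d hi with h | h
  · exact ⟨i, le_rfl, hi, h.2⟩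
  · by_cases hlast : i + 1 < n
    · obtain ⟨j, hij, hjn, hj⟩ := exists_addedHead_eq l q hd hlast
      exact ⟨j, by omega, hjn, h.2.trans hj⟩
    · obtain rfl : n = i + 1 := by omega
      have := neg_le_betaNumber q i
      rw [addedHead_self] at h
      omega
termination_by n - i

lemma addEdge_of_gt (l : ℕ) (q : ℕ → ℕ) {n : ℕ} (d : ℕ) {i : ℕ} (hi : n < i) :
    addEdge l q n d i = 0 := by
  obtain ⟨i, rfl⟩ := Nat.exists_eq_add_of_lt hi
  have := addedHead_of_gt l q d hi
  simp only [addEdge]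
  omega

namespace IsPartition

variable {l : ℕ} {q : ℕ → ℕ} {n d : ℕ}

lemma betaNumber_le_addedHead (hq : IsPartition q) (hn : plen q ≤ n) (i : ℕ) :
    betaNumber q i ≤ addedHead l q n d i := by
  rcases lt_trichotomy i n with hi | rfl | hi
  · rcases addedHead_of_lt l q d hi with h | h <;> omega
  · rw [addedHead_self, hq.betaNumber_of_plen_le hn]
    omega
  · rw [addedHead_of_gt l q d hi, hq.betaNumber_of_plen_le (by omega)]

lemma addedHead_le (hq : IsPartition q) (hl : 0 < l) (hn : plen q ≤ n) (hd : d ≤ 1) (i : ℕ) :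
    addedHead l q n d i ≤ betaNumber q i + l := by
  rcases lt_trichotomy i n with hi | rfl | hi
  · have := hq.addedHead_le hl hn hd (i + 1)
    have := hq.betaNumber_succ_lt i
    rcases addedHead_of_lt l q d hi with h | h <;> omega
  · rw [addedHead_self, hq.betaNumber_of_plen_le hn]
    omega
  · rw [addedHead_of_gt l q d hi, hq.betaNumber_of_plen_le (by omega)]
    omega
termination_by n - i

lemma betaNumber_addEdge_zero (hq : IsPartition q) (hn : plen q ≤ n) :
    betaNumber (addEdge l q n d) 0 = addedHead l q n d 0 := by
  have := hq.betaNumber_le_addedHead (l := l) (d := d) hn 0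
  have := neg_le_betaNumber q 0
  rw [betaNumber, addEdge]
  omega

lemma betaNumber_addEdge_succ (hq : IsPartition q) (hn : plen q ≤ n) (i : ℕ) :
    betaNumber (addEdge l q n d) (i + 1) = min (betaNumber q i) (addedHead l q n d (i + 1)) := by
  have := hq.betaNumber_le_addedHead (l := l) (d := d) hn (i + 1)
  have := neg_le_betaNumber q (i + 1)
  rw [betaNumber, betaNumber, addEdge]
  omega

protected lemma addEdge (hq : IsPartition q) (hl : 0 < l) (hn : plen q ≤ n) :
    IsPartition (addEdge l q n d) := by
  refine .of_succ_le (N := n + 1) (fun i => ?_) (addEdge_of_gt l q d n.lt_succ_self)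
  suffices betaNumber (addEdge l q n d) (i + 1) < betaNumber (addEdge l q n d) i by
    unfold betaNumber at this
    omega
  have hlow : min (betaNumber q i) (addedHead l q n d (i + 1)) < addedHead l q n d i := by
    by_cases hi : i < n
    · have := betaNumber_lt_addedHead hl q d hi
      omega
    · have := hq.betaNumber_le_addedHead (l := l) (d := d) hn i
      have := neg_le_betaNumber q i
      have := addedHead_of_gt l q d (show n < i + 1 by omega)
      omega
  rw [hq.betaNumber_addEdge_succ hn]
  cases i with
  | zero => rwa [hq.betaNumber_addEdge_zero hn]
  | succ i =>
    have := hq.betaNumber_succ_lt i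
    rw [hq.betaNumber_addEdge_succ hn]
    omega

lemma segmentHead_addEdge (hq : IsPartition q) (hl : 0 < l) (hn : plen q ≤ n) (hd : d ≤ 1) {i : ℕ}
    (hi : i ≤ n) : segmentHead l (addEdge l q n d) i = addedHead l q n d i := by
  induction i with
  | zero => exact hq.betaNumber_addEdge_zero hn
  | succ i ih =>
    have := hq.betaNumber_addEdge_succ (l := l) (d := d) hn i
    have := ih (by omega)
    have := hq.addedHead_le hl hn hd (i + 1)
    have := hq.betaNumber_succ_lt i
    rcases addedHead_of_lt l q d hi with h | h <;>
      rcases scan_succ l (addEdge l q n d) i with h' | h' <;> omega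

lemma removeLEdge_addEdge (hq : IsPartition q) (hl : 0 < l) (hn : plen q ≤ n) (hd : d ≤ 1) :
    removeLEdge l (addEdge l q n d) = q := by
  have hadd := hq.addEdge (d := d) hl hn
  funext i
  by_cases hi : i < n
  · have := hadd.betaNumber_removeLEdge hl i
    have := hq.betaNumber_addEdge_succ (l := l) (d := d) hn i
    have := hq.segmentHead_addEdge hl hn hd hi.le
    have := hq.addedHead_le hl hn hd i
    have := neg_le_betaNumber q i
    suffices betaNumber (removeLEdge l (addEdge l q n d)) i = betaNumber q i by
      unfold betaNumber at this
      omega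
    rcases addedHead_of_lt l q d hi with h | h <;> omega
  · rw [hq.eq_zero_iff.2 (by omega)]
    rcases (not_lt.1 hi).eq_or_lt with rfl | hi'
    · have := hq.segmentHead_addEdge hl hn hd le_rfl
      rw [addedHead_self] at this
      rw [hadd.removeLEdge_apply hl, this, addEdge_of_gt l q d n.lt_succ_self]
      omega
    · exact hadd.removeLEdge_of_plen_le hl (hadd.eq_zero_iff.1 (addEdge_of_gt l q d hi'))

lemma plen_addEdge (hq : IsPartition q) (hl : 0 < l) (hn : plen q ≤ n) (hd : d ≤ 1)
    (hnd : n = plen q ∨ d = 1) : plen (addEdge l q n d) = n + d := by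
  have hadd := hq.addEdge (d := d) hl hn
  have hrow : addEdge l q n d n = d := by
    cases n with
    | zero => simp [addEdge, addedHead_self]
    | succ n =>
      rw [addEdge, addedHead_self]
      omega
  have hlower := hadd.plen_removeLEdge_le hl
  rw [hq.removeLEdge_addEdge hl hn hd] at hlower
  rcases Nat.le_one_iff_eq_zero_or_eq_one.1 hd with rfl | rfl
  · have := hadd.eq_zero_iff.1 hrow
    omega
  · have := hadd.lt_plen_iff.2 (hrow.symm ▸ one_pos)
    have := hadd.eq_zero_iff.1 (addEdge_of_gt l q 1 n.lt_succ_self)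
    omega

lemma isLRegular_addEdge (hq : IsPartition q) (hl : 2 ≤ l) (hreg : IsLRegular l q)
    (hn : plen q ≤ n) (hd : d ≤ 1) (hnl : n + d ≤ plen q + l) (hnd : n = plen q ∨ d = 1) :
    IsLRegular l (addEdge l q n d) := by
  have hl0 : 0 < l := by omega
  rw [(hq.addEdge hl0 hn).isLRegular_iff_betaNumber hl0, hq.plen_addEdge hl0 hn hd hnd]
  rw [hq.isLRegular_iff_betaNumber hl0] at hreg
  intro i hi
  obtain ⟨k, hk⟩ : ∃ k, i + l - 1 = k + 1 := ⟨i + l - 2, by omega⟩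
  have hbelow : n < k + 1 → addedHead l q n d (k + 1) = -((k + 1 : ℕ) : ℤ) :=
    addedHead_of_gt l q d
  have hhead : min (betaNumber q k) (addedHead l q n d (k + 1)) + l ≤ addedHead l q n d i := by
    by_cases hin : i < n
    · obtain ⟨j, -, hjn, hj⟩ := exists_addedHead_eq l q hd hin
      suffices j ≤ k by
        have := hq.betaNumber_antitone this
        omega
      by_contra! hkj
      have := hreg i (by omega)
      have := hq.betaNumber_antitone (show i + l - 1 ≤ j by omega)
      have := betaNumber_lt_addedHead hl0 q d hin
      omega
    · obtain rfl : i = n := by omega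
      have := addedHead_self l q i d
      omega
  rw [hk, hq.betaNumber_addEdge_succ hn]
  cases i with
  | zero => rwa [hq.betaNumber_addEdge_zero hn]
  | succ i =>
    rw [hq.betaNumber_addEdge_succ hn]
    refine le_min ?_ hhead
    by_cases hiq : i < plen q
    · have := hreg i hiq
      rw [show i + l - 1 = k by omega] at this
      omega
    · have := hq.betaNumber_of_plen_le (not_lt.1 hiq)
      have := hbelow (by omega)
      omega

theorem exists_removeLEdge_eq (hq : IsPartition q) (hl : 2 ≤ l) (hreg : IsLRegular l q) {r : ℕ}
    (hle : plen q ≤ r) (hle' : r ≤ plen q + l) :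
    ∃ p, IsPartition p ∧ IsLRegular l p ∧ removeLEdge l p = q ∧ plen p = r := by
  have hl0 : 0 < l := by omega
  obtain ⟨n, d, hn, hd, hnd, rfl⟩ :
      ∃ n d, plen q ≤ n ∧ d ≤ 1 ∧ (n = plen q ∨ d = 1) ∧ n + d = r := by
    rcases hle.eq_or_lt with rfl | hlt
    · exact ⟨plen q, 0, le_rfl, zero_le_one, .inl rfl, rfl⟩
    · exact ⟨r - 1, 1, by omega, le_rfl, .inr rfl, by omega⟩
  exact ⟨addEdge l q n d, hq.addEdge hl0 hn, hq.isLRegular_addEdge hl hreg hn hd hle' hnd,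
    hq.removeLEdge_addEdge hl0 hn hd, hq.plen_addEdge hl0 hn hd hnd⟩

end IsPartition

/-! ### The length of `Mull(λ)` -/

namespace IsPartition

variable {l : ℕ} {p : ℕ → ℕ}

lemma pdeg_removeLEdge_lt (hp : IsPartition p) (hl : 0 < l) (hne : p 0 ≠ 0) :
    pdeg (removeLEdge l p) < pdeg p := by
  have := hp.pdeg_removeLEdge_add_plen_le hl
  have := hp.lt_plen_iff.2 (Nat.pos_of_ne_zero hne)
  omega

lemma mullLen_eq_zero (hp : IsPartition p) (hl : 0 < l) (h0 : p 0 = 0) : mullLen l p = 0 := by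
  have := hp.mullLen_eq_scanLength hl (hp.eq_zero_iff.1 h0)
  simpa [scanLength, betaNumber, h0] using this

lemma mullAux_spec (hp : IsPartition p) (hl : 2 ≤ l) (hreg : IsLRegular l p) {n : ℕ}
    (hn : pdeg p ≤ n) :
    IsPartition (mullAux l n p) ∧ IsLRegular l (mullAux l n p) ∧
      plen (mullAux l n p) = mullLen l p := by
  have hl0 : 0 < l := by omega
  have hempty {p : ℕ → ℕ} (hp : IsPartition p) (h0 : p 0 = 0) :
      IsPartition (fun _ => 0) ∧ IsLRegular l (fun _ => 0) ∧ plen (fun _ => 0) = mullLen l p :=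
    ⟨zero, fun _ h => (h rfl).elim,
      (zero.plen_eq (n := 0) (by simp)).trans (hp.mullLen_eq_zero hl0 h0).symm⟩
  induction n generalizing p with
  | zero =>
    refine hempty hp (by_contra fun hne => ?_)
    have := hp.pdeg_removeLEdge_lt hl0 hne
    omega
  | succ n ih =>
    rw [mullAux]
    split_ifs with h0
    · exact hempty hp h0
    · have hlt := hp.pdeg_removeLEdge_lt hl0 h0
      obtain ⟨hpart, hreg', hplen⟩ :=
        ih (hp.removeLEdge hl0) (hp.isLRegular_removeLEdge hl0 hreg) (by omega)
      obtain ⟨hle, hle'⟩ := hp.mullLen_removeLEdge_le hl0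
      rw [← hplen] at hle hle'
      obtain ⟨hμ, hμreg, -, hμlen⟩ :=
        Classical.epsilon_spec (hpart.exists_removeLEdge_eq hl hreg' hle hle')
      exact ⟨hμ, hμreg, hμlen⟩

theorem plen_mull (hp : IsPartition p) (hl : 2 ≤ l) (hreg : IsLRegular l p) :
    plen (mull l p) = mullLen l p :=
  (hp.mullAux_spec hl hreg le_rfl).2.2

lemma mullLen_shift_firstSeg (hp : IsPartition p) (hl : 0 < l) (hseg : firstSeg l p ≤ plen p) :
    mullLen l p + firstSeg l p = mullLen l (fun i => p (i + firstSeg l p)) + l := by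
  have hk : plen p - firstSeg l p + firstSeg l p = plen p := by omega
  have hlen := hp.mullLen_eq_scanLength hl hk.ge
  have hlen' := (hp.shift (firstSeg l p)).mullLen_eq_scanLength hl (hp.plen_shift _).le
  have := (hp.scan_add_firstSeg hl (plen p - firstSeg l p)).2
  omega

lemma mullLen_of_plen_lt_firstSeg (hp : IsPartition p) (hl : 0 < l)
    (hseg : plen p < firstSeg l p) : mullLen l p = p 0 := by
  exact_mod_cast (hp.mullLen_eq_scanLength hl le_rfl).trans (scan_of_lt_firstSeg hl hseg).2

lemma add_plen_lt_of_plen_lt_firstSeg (hp : IsPartition p) (hl : 0 < l)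
    (hseg : plen p < firstSeg l p) : p 0 + plen p < l := by
  have hlt := lt_betaNumber_of_lt_firstSeg hl hseg
  rw [hp.betaNumber_of_plen_le le_rfl] at hlt
  omega

lemma firstSeg_lt (hp : IsPartition p) (hl : 0 < l) (hreg : IsLRegular l p) (h0 : p 0 ≠ 0) :
    firstSeg l p < l := by
  have hgap := (hp.isLRegular_iff_betaNumber hl).1 hreg 0
    (hp.lt_plen_iff.2 (Nat.pos_of_ne_zero h0))
  by_contra! hle
  have := lt_betaNumber_of_lt_firstSeg hl (show 0 + l - 1 < firstSeg l p by omega)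
  simp only [betaNumber] at *
  omega

end IsPartition

/-! ### Sums of distinguished partitions -/

/-- A sum of `m_i`-distinguished partitions with `0 < m_i < l` and `∑ m_i = m`. -/
def IsDistinguishedSum (l m : ℕ) (p : ℕ → ℕ) : Prop :=
  ∃ (t : ℕ) (ms : Fin t → ℕ) (lam : Fin t → (ℕ → ℕ)),
    (∀ i, 0 < ms i ∧ ms i < l ∧ IsDistinguished l (ms i) (lam i)) ∧
    (∑ i, ms i) = m ∧ ∀ k, p k = ∑ i, lam i k

/-- Adding to `q` any `l`-fold multiple `lλ̄` of a partition with `λ̄_1 ≤ (m(l-1) - q_1) / l`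
gives a sum of distinguished partitions of total weight `m`. The subtraction is truncated, so
that `λ̄ = 0` is always allowed. -/
def AbsorbsColumns (l m : ℕ) (q : ℕ → ℕ) : Prop :=
  ∀ pb, IsPartition pb → l * pb 0 ≤ m * (l - 1) - q 0 → IsDistinguishedSum l m (q + l • pb)

lemma IsDistinguishedSum.zero (l : ℕ) : IsDistinguishedSum l 0 0 :=
  ⟨0, Fin.elim0, Fin.elim0, fun i => i.elim0, by simp, by simp⟩

lemma IsDistinguished.isDistinguishedSum {l m : ℕ} {p : ℕ → ℕ} (hp : IsDistinguished l m p)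
    (hm : 0 < m) (hml : m < l) : IsDistinguishedSum l m p :=
  ⟨1, fun _ => m, fun _ => p, fun _ => ⟨hm, hml, hp⟩, by simp, by simp⟩

lemma IsDistinguished.rectangle {l m : ℕ} {pb : ℕ → ℕ} (k : ℕ) (hpb : IsPartition pb)
    (hlt : pb 0 < m) (hml : m < l) :
    IsDistinguished l m ((fun i => if i < k then l - m else 0) + l • pb) :=
  ⟨k, fun _ => 0, pb, hpb, hlt, fun _ _ _ => le_rfl, Nat.sub_pos_of_lt hml, fun _ _ => rfl,
    fun _ => rfl⟩

lemma IsDistinguishedSum.add {l m₁ m₂ : ℕ} {p₁ p₂ : ℕ → ℕ} (h₁ : IsDistinguishedSum l m₁ p₁)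
    (h₂ : IsDistinguishedSum l m₂ p₂) : IsDistinguishedSum l (m₁ + m₂) (p₁ + p₂) := by
  obtain ⟨t₁, ms₁, lam₁, hdist₁, hweight₁, hsum₁⟩ := h₁
  obtain ⟨t₂, ms₂, lam₂, hdist₂, hweight₂, hsum₂⟩ := h₂
  refine ⟨t₁ + t₂, Fin.append ms₁ ms₂, Fin.append lam₁ lam₂, ?_, ?_, fun k => ?_⟩
  · exact Fin.addCases (by simpa using hdist₁) (by simpa using hdist₂)
  · simp [Fin.sum_univ_add, hweight₁, hweight₂]
  · simp [Fin.sum_univ_add, hsum₁, hsum₂]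

namespace AbsorbsColumns

variable {l m : ℕ}

lemma add {m₁ m₂ C : ℕ} {q₁ q₂ : ℕ → ℕ} (h₁ : AbsorbsColumns l m₁ q₁)
    (h₂ : AbsorbsColumns l m₂ q₂) (htight : m₁ * (l - 1) = l * C + q₁ 0) :
    AbsorbsColumns l (m₁ + m₂) (q₁ + q₂) := by
  intro pb hpb hbound
  have hsplit : q₁ + q₂ + l • pb =
      (q₁ + l • fun i => min (pb i) C) + (q₂ + l • fun i => pb i - C) := by
    funext i
    have : l * pb i = l * min (pb i) C + l * (pb i - C) := by
      rw [← mul_add]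
      congr 1
      omega
    simp only [Pi.add_apply, Pi.smul_apply, smul_eq_mul]
    omega
  rw [Pi.add_apply, add_mul, htight] at hbound
  rw [hsplit]
  refine (h₁ _ (hpb.min_const C) ?_).add (h₂ _ (hpb.sub_const C) ?_)
  · rw [htight, Nat.add_sub_cancel]
    exact Nat.mul_le_mul_left l (min_le_right _ _)
  · rw [Nat.mul_sub]
    omega

lemma of_distinguished {k : ℕ} {a : ℕ → ℕ} (hm : 0 < m) (ha : Antitone a) (ha0 : a 0 < l - m)
    (ham : a m = 0) : AbsorbsColumns l m (fun i => if i < k then l - m else a (i - k)) := by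
  intro pb hpb hbound
  have hlt : l * pb 0 < l * m := calc
    l * pb 0 ≤ m * (l - 1) := hbound.trans (Nat.sub_le _ _)
    _ < m * l := Nat.mul_lt_mul_of_pos_left (by omega) hm
    _ = l * m := mul_comm m l
  have hdist : IsDistinguished l m ((fun i => if i < k then l - m else a (i - k)) + l • pb) :=
    ⟨k, a, pb, hpb, Nat.lt_of_mul_lt_mul_left hlt, fun _ _ hij => ha hij, ha0,
      fun i hi => Nat.eq_zero_of_le_zero (ham ▸ ha hi), fun _ => rfl⟩
  exact hdist.isDistinguishedSum hm (by omega)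

lemma of_antitone {q : ℕ → ℕ} (hm : 0 < m) (hq : Antitone q) (hq0 : q 0 < l - m)
    (hqm : q m = 0) : AbsorbsColumns l m q := by
  simpa only [Nat.not_lt_zero, if_false, Nat.sub_zero] using
    of_distinguished (k := 0) hm hq hq0 hqm

lemma zero_self (hl : 2 ≤ l) : AbsorbsColumns l l 0 := by
  intro pb hpb hbound
  have hle : pb 0 ≤ l - 1 := Nat.le_of_mul_le_mul_left hbound (by omega)
  have hone := (IsDistinguished.rectangle (plen pb) .zero one_pos hl).isDistinguishedSum one_pos hl
  have hrest := (IsDistinguished.rectangle (l := l) (plen pb) (hpb.sub_const 1)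
    (show pb 0 - 1 < l - 1 by omega) (by omega)).isDistinguishedSum (by omega) (by omega)
  convert hone.add hrest using 1
  · omega
  · funext i
    have hi := hpb.lt_plen_iff (i := i)
    simp only [Pi.add_apply, Pi.smul_apply, Pi.zero_apply, smul_eq_mul, mul_zero,
      Nat.mul_sub, mul_one]
    split_ifs with hlt
    · have : l * 1 ≤ l * pb i := Nat.mul_le_mul_left l (hi.1 hlt)
      omega
    · rw [Nat.eq_zero_of_not_pos (hi.not.1 hlt)]
      omega

lemma zero (hl : 2 ≤ l) (m : ℕ) : AbsorbsColumns l m 0 := by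
  induction m using Nat.strong_induction_on with
  | h m ih =>
    rcases Nat.eq_zero_or_pos m with rfl | hm
    · intro pb hpb hbound
      have h0 : pb 0 = 0 := by
        rw [Nat.zero_mul, Nat.zero_sub, Nat.le_zero, Nat.mul_eq_zero] at hbound
        omega
      have hpb0 : pb = 0 := funext fun i => Nat.eq_zero_of_le_zero (h0 ▸ hpb.antitone i.zero_le)
      simpa [hpb0] using IsDistinguishedSum.zero l
    by_cases hml : m < l
    · exact of_antitone hm (fun _ _ _ => le_rfl) (Nat.sub_pos_of_lt hml) rfl
    · have := (zero_self hl).add (C := l - 1) (ih (m - l) (by omega)) rfl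
      rwa [add_zero, Nat.add_sub_cancel' (not_lt.1 hml)] at this

lemma conjP_of_shift {p : ℕ → ℕ} (hp : IsPartition p) {h : ℕ} (hpos : 0 < h) (hlen : h ≤ plen p)
    (hhl : h < l) (hwidth : p 0 ≤ p (h - 1) + (l - h))
    (hrest : AbsorbsColumns l m (conjP fun i => p (i + h))) :
    AbsorbsColumns l (l - h + m) (conjP p) := by
  have hfull (i : ℕ) : i < p (h - 1) ↔ h ≤ conjP p i := by
    rw [← hp.lt_conjP_iff]
    omega
  have hend : conjP p (p (h - 1) + (l - h)) = 0 := by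
    rwa [hp.conjP.eq_zero_iff, hp.plen_conjP]
  have hblock := of_distinguished (l := l) (m := l - h) (k := p (h - 1))
    (a := fun i => conjP p (p (h - 1) + i)) (by omega)
    (fun _ _ hij => hp.conjP.antitone (Nat.add_le_add_left hij _))
    (by have := (hfull (p (h - 1))).not.1 (lt_irrefl _); rw [add_zero]; omega) hend
  rw [hp.conjP_shift] at hrest
  have hsum := hblock.add (C := l - h - 1) hrest ?_
  · convert hsum using 1
    funext i
    have hi := hfull i
    rw [Pi.add_apply]
    split_ifs with hlt
    · omega
    · rw [Nat.add_sub_cancel' (not_lt.1 hlt)]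
      omega
  · rw [if_pos ((hfull 0).2 (hp.conjP_apply_zero ▸ hlen))]
    obtain ⟨w, rfl⟩ : ∃ w, l = w + 1 + h := ⟨l - h - 1, by omega⟩
    simp only [Nat.add_sub_cancel, show w + 1 + h - 1 = w + h by omega,
      show w + 1 + h - (w + 1) = h by omega]
    ring

end AbsorbsColumns

theorem IsPartition.absorbsColumns_conjP {l m : ℕ} {p : ℕ → ℕ} (hp : IsPartition p) (hl : 2 ≤ l)
    (hreg : IsLRegular l p) (hm : mullLen l p ≤ m) : AbsorbsColumns l m (conjP p) := by
  have hl0 : 0 < l := by omega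
  induction hn : plen p using Nat.strong_induction_on generalizing p m with
  | h n ih =>
    rcases Nat.eq_zero_or_pos (p 0) with h0 | h0
    · have : conjP p = 0 := funext fun i =>
        hp.conjP.eq_zero_iff.2 (by rw [hp.plen_conjP]; omega)
      exact this ▸ AbsorbsColumns.zero hl m
    have hsplit {h : ℕ} (hpos : 0 < h) (hlen : h ≤ plen p) (hhl : h < l)
        (hwidth : p 0 ≤ p (h - 1) + (l - h))
        (hrest : mullLen l (fun i => p (i + h)) + (l - h) ≤ m) :
        AbsorbsColumns l m (conjP p) := by
      rw [← Nat.add_sub_cancel' (show l - h ≤ m by omega)]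
      exact AbsorbsColumns.conjP_of_shift hp hpos hlen hhl hwidth <|
        ih (plen p - h) (by omega) (hp.shift h) (hreg.shift hl0 h) (by omega)
          (hp.plen_shift h)
    by_cases hseg : firstSeg l p ≤ plen p
    · have hpos := (hp.firstSeg_spec l).1
      have hhl := hp.firstSeg_lt hl0 hreg h0.ne'
      have hlast := lt_betaNumber_of_lt_firstSeg hl0
        (show firstSeg l p - 1 < firstSeg l p by omega)
      have := hp.mullLen_shift_firstSeg hl0 hseg
      unfold betaNumber at hlast
      exact hsplit hpos hseg hhl (by omega) (by omega)
    · have hmull := hp.mullLen_of_plen_lt_firstSeg hl0 (not_le.1 hseg)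
      have hedge := hp.add_plen_lt_of_plen_lt_firstSeg hl0 (not_le.1 hseg)
      by_cases hml : m + plen p < l
      · exact AbsorbsColumns.of_antitone (by omega) hp.conjP.antitone
          (by rw [hp.conjP_apply_zero]; omega)
          (hp.conjP.eq_zero_iff.2 (by rw [hp.plen_conjP]; omega))
      · have := (hp.shift (plen p)).mullLen_eq_zero hl0
          (by rw [Nat.zero_add]; exact hp.eq_zero_iff.2 le_rfl)
        exact hsplit (hp.lt_plen_iff.2 h0) le_rfl (by omega) (by omega) (by omega)

/-- Let `m ≥ 1` and let `λ = λ⁰ + lλ̄` be a partition with `λ⁰` `l`-restricted and `λ̄` a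
partition. If `ℓ(Mull((λ⁰)')) ≤ m` (i.e. `λ⁰` is `m`-special) and `λ_1 ≤ m(l-1)`, then
`λ = λ(1) + … + λ(s)` where each `λ(i)` is an `m_i`-distinguished partition (not
necessarily `l`-restricted) for some `0 < m_i < l`, and `m = m_1 + … + m_s`. -/
theorem sum_of_distinguished_of_special_bounded (l : ℕ) (hl : 2 ≤ l)
    (m : ℕ) (hm : 1 ≤ m) (p p0 pb : ℕ → ℕ)
    (hp0 : IsPartition p0) (hres : IsLRestricted l p0)
    (hpb : IsPartition pb) (hsum : ∀ k, p k = p0 k + l * pb k)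
    (hspec : plen (mull l (conjP p0)) ≤ m)
    (hbd : p 0 ≤ m * (l - 1)) :
    ∃ (t : ℕ) (ms : Fin t → ℕ) (lam : Fin t → (ℕ → ℕ)),
      (∀ i, 0 < ms i ∧ ms i < l ∧ IsDistinguished l (ms i) (lam i)) ∧
      (∑ i, ms i) = m ∧ ∀ k, p k = ∑ i, lam i k := by
  have hreg : IsLRegular l (conjP p0) := hres.isLRegular_conjP hp0
  have hmull : mullLen l (conjP p0) ≤ m := hp0.conjP.plen_mull hl hreg ▸ hspec
  have habsorb : AbsorbsColumns l m p0 := by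
    simpa only [hp0.conjP_conjP] using hp0.conjP.absorbsColumns_conjP hl hreg hmull
  have hbound : l * pb 0 ≤ m * (l - 1) - p0 0 := by
    rw [hsum] at hbd
    omega
  obtain rfl : p = p0 + l • pb := funext hsum
  exact habsorb pb hpb hbound

end
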